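/- arXiv:math/9505205 — 2 statements merged into one kernel-verified Lean document; each statement's English description precedes it below -/
import Mathlib

section
/- Let L = { a + b·ω : a, b ∈ ℤ } ⊂ ℂ with ω = exp(iπ/3) be the triangular lattice, so that each v ∈ L has the six neighbors v + ω^k, k = 0,…,5, in cyclic order. For ρ : L → (0,∞) define the angle sum Θ_ρ(v) = Σ_{k=0}^{5} arccos( 1 − 2ρ(v+ω^k)ρ(v+ω^{k+1}) / ((ρ(v)+ρ(v+ω^k))(ρ(v)+ρ(v+ω^{k+1}))) ), indices k taken mod 6. Suppose ρ, ρ̃ : L → (0,∞) satisfy Θ_{ρ̃}(v) ≥ Θ_ρ(v) for every v ∈ L. Then the function A(v) = ρ̃(v)/ρ(v) is bounded above if and only if it is constant. -/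
open Real Set

/-- `ω = exp(iπ/3)`, a primitive sixth root of unity. -/
noncomputable def hexω : ℂ := Complex.exp ((Real.pi / 3 : ℂ) * Complex.I)

/-- The triangular lattice `L = {a + b·ω : a, b ∈ ℤ} ⊂ ℂ`. -/
def hexLattice : Set ℂ := {z | ∃ a b : ℤ, z = (a : ℂ) + (b : ℂ) * hexω}

/-- The angle sum of the label `ρ` at a vertex `v` of the triangular lattice:
the neighbors of `v` are `v + ω^k`, `k = 0, …, 5`, in cyclic order. -/
noncomputable def hexAngleSum (ρ : ℂ → ℝ) (v : ℂ) : ℝ :=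
  ∑ k ∈ Finset.range 6,
    Real.arccos (1 - 2 * ρ (v + hexω ^ k) * ρ (v + hexω ^ (k + 1)) /
      ((ρ v + ρ (v + hexω ^ k)) * (ρ v + ρ (v + hexω ^ (k + 1)))))

/-!
In a triangle of mutually tangent circles, the derivative of the angle at `p` with respect to the
logarithm of the radius at `q` is the inradius divided by the length of `pq`. This is symmetric in
`p` and `q` and at most `1 / 2`. Integrating along the geometric interpolation from `ρ` to `σ`
therefore writes `Θ_σ - Θ_ρ` as the Laplacian of `log (σ / ρ)` for a network on the triangular
lattice with symmetric, positive, bounded conductances. The subpacking hypothesis says that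
`log (σ / ρ)` is subharmonic for this network. The network is recurrent by the Nash-Williams
criterion, since its concentric cuts have conductance `O(n)` and the harmonic series diverges.
On a recurrent network a subharmonic function `f` that is bounded above is constant along edges:
`exp f` is bounded, positive and subharmonic, and Caccioppoli's inequality bounds its gradient at a
vertex by the energy of cutoff functions, which can be taken arbitrarily small.
-/

lemma neg_sq_mul_sub_sq_mul_mul_sub_le {p q x y M : ℝ} (hx : 0 ≤ x) (hy : 0 ≤ y) (hxM : x ≤ M)
    (hyM : y ≤ M) :
    -((q ^ 2 * y - p ^ 2 * x) * (y - x)) ≤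
      -(1 / 4) * ((p ^ 2 + q ^ 2) * (y - x) ^ 2) + 2 * M ^ 2 * (q - p) ^ 2 := by
  have young : -((q ^ 2 * y - p ^ 2 * x) * (y - x)) ≤
      -(1 / 4) * ((p ^ 2 + q ^ 2) * (y - x) ^ 2) + (x + y) ^ 2 / 2 * (q - p) ^ 2 := by
    nlinarith [sq_nonneg ((p - q) * (x + y) - (p + q) * (y - x) / 2),
      mul_nonneg (sq_nonneg (p - q)) (sq_nonneg (y - x))]
  have hsum : (x + y) ^ 2 / 2 ≤ 2 * M ^ 2 := by nlinarith
  exact young.trans (by gcongr)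

lemma exp_mul_sub_le_exp_sub_exp (x y : ℝ) : exp x * (y - x) ≤ exp y - exp x := by
  have hy : exp y = exp x * exp (y - x) := by rw [← exp_add, add_sub_cancel]
  rw [hy]
  nlinarith [exp_pos x, add_one_le_exp (y - x)]

/-! ### Recurrent networks -/

/-- A locally finite electrical network on the vertex set `V`: symmetric nonnegative conductances,
with `cond v w = 0` when `v` and `w` are not joined by an edge. -/
structure Network (V : Type*) where
  cond : V → V → ℝ
  cond_nonneg : ∀ v w, 0 ≤ cond v w
  cond_symm : ∀ v w, cond v w = cond w v
  finite_support_cond : ∀ v, (cond v).support.Finite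

namespace Network

variable {V : Type*} (N : Network V)

/-- The weighted graph Laplacian, with the sign for which convex functions have `0 ≤ laplacian`.
The sum has finite support because the network is locally finite. -/
noncomputable def laplacian (f : V → ℝ) (v : V) : ℝ := ∑' w, N.cond v w * (f w - f v)

/-- Subharmonicity: the weighted mean of `f` over the neighbors of each `v` is at least `f v`. -/
def IsSubharmonic (f : V → ℝ) : Prop := ∀ v, 0 ≤ N.laplacian f v

/-- The Dirichlet energy, each edge being counted once in each direction. It is meaningful for
finitely supported `φ`, for which only finitely many terms are nonzero. -/
noncomputable def energy (φ : V → ℝ) : ℝ :=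
  ∑' p : V × V, N.cond p.1 p.2 * (φ p.2 - φ p.1) ^ 2

/-- Recurrence, in its potential-theoretic form: every vertex has zero capacity to infinity. -/
def IsRecurrent : Prop :=
  ∀ v, ∀ ε > 0, ∃ φ : V → ℝ, φ.support.Finite ∧ φ v = 1 ∧ N.energy φ ≤ ε

/-- The total conductance of the edges leading from the level set `r = n` to `r = n + 1`. -/
noncomputable def cutConductance (r : V → ℕ) (n : ℕ) : ℝ :=
  ∑' p : V × V, N.cond p.1 p.2 * if r p.1 = n ∧ r p.2 = n + 1 then 1 else 0

lemma finite_edges_from {s : Set V} (hs : s.Finite) :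
    {p : V × V | p.1 ∈ s ∧ N.cond p.1 p.2 ≠ 0}.Finite := by
  refine (hs.biUnion fun v _ ↦ (N.finite_support_cond v).image (Prod.mk v)).subset ?_
  rintro ⟨v, w⟩ ⟨hv, hvw⟩
  exact mem_biUnion hv ⟨w, hvw, rfl⟩

lemma finite_edges_touching {s : Set V} (hs : s.Finite) :
    {p : V × V | (p.1 ∈ s ∨ p.2 ∈ s) ∧ N.cond p.1 p.2 ≠ 0}.Finite := by
  refine ((N.finite_edges_from hs).union
    ((N.finite_edges_from hs).preimage Prod.swap_injective.injOn)).subset ?_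
  rintro ⟨v, w⟩ ⟨hv | hw, hvw⟩
  · exact Or.inl ⟨hv, hvw⟩
  · exact Or.inr ⟨hw, by rwa [N.cond_symm] at hvw⟩

lemma summable_cond_mul_of_finite {s : Set V} (hs : s.Finite) {F : V × V → ℝ}
    (hF : ∀ p, p.1 ∉ s → p.2 ∉ s → F p = 0) :
    Summable fun p : V × V ↦ N.cond p.1 p.2 * F p := by
  refine summable_of_hasFiniteSupport ((N.finite_edges_touching hs).subset fun p hp ↦ ?_)
  obtain ⟨hcond, hFp⟩ := mul_ne_zero_iff.1 (Function.mem_support.1 hp)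
  exact ⟨by by_contra! h; exact hFp (hF p h.1 h.2), hcond⟩

lemma summable_cond_mul (v : V) (g : V → ℝ) : Summable fun w ↦ N.cond v w * g w :=
  summable_of_hasFiniteSupport ((N.finite_support_cond v).subset fun _ hw ↦ left_ne_zero_of_mul hw)

lemma tsum_cond_mul_swap (F : V × V → ℝ) :
    ∑' p : V × V, N.cond p.1 p.2 * F p.swap = ∑' p : V × V, N.cond p.1 p.2 * F p := by
  rw [← (Equiv.prodComm V V).tsum_eq]
  exact tsum_congr fun p ↦ by simp [N.cond_symm p.2 p.1]

lemma tsum_mul_laplacian {ψ : V → ℝ} (hψ : ψ.support.Finite) (f : V → ℝ) :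
    ∑' v, ψ v * N.laplacian f v =
      -(1 / 2) * ∑' p : V × V, N.cond p.1 p.2 * ((ψ p.2 - ψ p.1) * (f p.2 - f p.1)) := by
  let F : V × V → ℝ := fun p ↦ ψ p.1 * (f p.2 - f p.1)
  have hF : Summable fun p : V × V ↦ N.cond p.1 p.2 * F p :=
    N.summable_cond_mul_of_finite hψ fun p hp _ ↦ by simp [F, Function.notMem_support.1 hp]
  have hFswap : Summable fun p : V × V ↦ N.cond p.1 p.2 * F p.swap :=
    N.summable_cond_mul_of_finite hψ fun p _ hp ↦ by simp [F, Function.notMem_support.1 hp]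
  have hfubini : ∑' v, ψ v * N.laplacian f v = ∑' p : V × V, N.cond p.1 p.2 * F p := by
    rw [hF.tsum_prod]
    refine tsum_congr fun v ↦ ?_
    rw [laplacian, ← tsum_mul_left]
    exact tsum_congr fun w ↦ mul_left_comm _ _ _
  have hsymm : ∑' p : V × V, N.cond p.1 p.2 * ((ψ p.2 - ψ p.1) * (f p.2 - f p.1)) =
      -(∑' p : V × V, N.cond p.1 p.2 * F p + ∑' p : V × V, N.cond p.1 p.2 * F p.swap) := by
    rw [← hF.tsum_add hFswap, ← tsum_neg]
    refine tsum_congr fun p ↦ ?_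
    simp only [F, Prod.fst_swap, Prod.snd_swap]
    ring
  rw [hfubini, hsymm, N.tsum_cond_mul_swap]
  ring

section Liouville

variable {N} {f : V → ℝ}

/-- Test the inequality `0 ≤ laplacian f` against `φ ^ 2 * f`. -/
lemma IsSubharmonic.caccioppoli {M : ℝ} (hf : N.IsSubharmonic f) (hf0 : ∀ v, 0 ≤ f v)
    (hfM : ∀ v, f v ≤ M) {φ : V → ℝ} (hφ : φ.support.Finite) :
    ∑' p : V × V, N.cond p.1 p.2 * ((φ p.1 ^ 2 + φ p.2 ^ 2) * (f p.2 - f p.1) ^ 2) ≤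
      8 * M ^ 2 * N.energy φ := by
  let ψ : V → ℝ := fun v ↦ φ v ^ 2 * f v
  let gradψf : V × V → ℝ := fun p ↦ (ψ p.2 - ψ p.1) * (f p.2 - f p.1)
  let gradf : V × V → ℝ := fun p ↦ (φ p.1 ^ 2 + φ p.2 ^ 2) * (f p.2 - f p.1) ^ 2
  have summable {F : V × V → ℝ} (hF : ∀ p, φ p.1 = 0 → φ p.2 = 0 → F p = 0) :
      Summable fun p : V × V ↦ N.cond p.1 p.2 * F p :=
    N.summable_cond_mul_of_finite hφ fun p h₁ h₂ ↦
      hF p (Function.notMem_support.1 h₁) (Function.notMem_support.1 h₂)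
  have hgradψf : Summable fun p : V × V ↦ N.cond p.1 p.2 * gradψf p :=
    summable fun p h₁ h₂ ↦ by simp [gradψf, ψ, h₁, h₂]
  have hgradf : Summable fun p : V × V ↦ N.cond p.1 p.2 * gradf p :=
    summable fun p h₁ h₂ ↦ by simp [gradf, h₁, h₂]
  have henergy : Summable fun p : V × V ↦ N.cond p.1 p.2 * (φ p.2 - φ p.1) ^ 2 :=
    summable fun p h₁ h₂ ↦ by simp [h₁, h₂]
  have htest : 0 ≤ -(1 / 2) * ∑' p : V × V, N.cond p.1 p.2 * gradψf p := by
    have hψ : ψ.support.Finite := hφ.subset fun v hv h ↦ hv (by simp [ψ, h])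
    rw [← N.tsum_mul_laplacian hψ f]
    exact tsum_nonneg fun v ↦ mul_nonneg (mul_nonneg (sq_nonneg _) (hf0 v)) (hf v)
  have hpointwise : -∑' p : V × V, N.cond p.1 p.2 * gradψf p ≤
      -(1 / 4) * ∑' p : V × V, N.cond p.1 p.2 * gradf p + 2 * M ^ 2 * N.energy φ := by
    rw [energy, ← tsum_neg, ← tsum_mul_left, ← tsum_mul_left,
      ← (hgradf.mul_left _).tsum_add (henergy.mul_left _)]
    refine hgradψf.neg.tsum_le_tsum (fun p ↦ ?_) ((hgradf.mul_left _).add (henergy.mul_left _))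
    have := mul_le_mul_of_nonneg_left (neg_sq_mul_sub_sq_mul_mul_sub_le (p := φ p.1) (q := φ p.2)
      (hf0 p.1) (hf0 p.2) (hfM p.1) (hfM p.2)) (N.cond_nonneg p.1 p.2)
    simp only [gradψf, gradf, ψ]
    linarith
  linarith

lemma IsSubharmonic.cond_mul_sq_sub_le {M : ℝ} (hf : N.IsSubharmonic f) (hf0 : ∀ v, 0 ≤ f v)
    (hfM : ∀ v, f v ≤ M) {φ : V → ℝ} (hφ : φ.support.Finite) {v : V} (hφv : φ v = 1) (w : V) :
    N.cond v w * (f w - f v) ^ 2 ≤ 8 * M ^ 2 * N.energy φ := by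
  have hterm : N.cond v w * (f w - f v) ^ 2 ≤
      N.cond v w * ((φ v ^ 2 + φ w ^ 2) * (f w - f v) ^ 2) := by
    refine mul_le_mul_of_nonneg_left ?_ (N.cond_nonneg v w)
    rw [hφv]
    nlinarith [mul_nonneg (sq_nonneg (φ w)) (sq_nonneg (f w - f v))]
  refine hterm.trans (le_trans ?_ (hf.caccioppoli hf0 hfM hφ))
  refine Summable.le_tsum (f := fun p : V × V ↦
    N.cond p.1 p.2 * ((φ p.1 ^ 2 + φ p.2 ^ 2) * (f p.2 - f p.1) ^ 2))
    (N.summable_cond_mul_of_finite hφ fun p h₁ h₂ ↦ ?_) (v, w) fun p _ ↦ ?_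
  · simp [Function.notMem_support.1 h₁, Function.notMem_support.1 h₂]
  · have := N.cond_nonneg p.1 p.2
    positivity

lemma IsSubharmonic.eq_of_cond_ne_zero_of_nonneg_of_le {M : ℝ} (hN : N.IsRecurrent)
    (hf : N.IsSubharmonic f) (hf0 : ∀ v, 0 ≤ f v) (hfM : ∀ v, f v ≤ M) {v w : V}
    (hvw : N.cond v w ≠ 0) : f w = f v := by
  by_contra hne
  have hcond : 0 < N.cond v w := (N.cond_nonneg v w).lt_of_ne' hvw
  have hpos : 0 < N.cond v w * (f w - f v) ^ 2 :=
    mul_pos hcond (sq_pos_of_ne_zero (sub_ne_zero.2 hne))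
  set δ := N.cond v w * (f w - f v) ^ 2
  obtain ⟨φ, hφ, hφv, hε⟩ := hN v (δ / (8 * M ^ 2 + 1)) (by positivity)
  have hle : δ ≤ 8 * M ^ 2 * (δ / (8 * M ^ 2 + 1)) :=
    (hf.cond_mul_sq_sub_le hf0 hfM hφ hφv w).trans (by gcongr)
  rw [← mul_div_assoc, le_div_iff₀ (by positivity)] at hle
  linarith

lemma IsSubharmonic.exp (hf : N.IsSubharmonic f) : N.IsSubharmonic fun v ↦ Real.exp (f v) := by
  intro v
  calc 0 ≤ Real.exp (f v) * N.laplacian f v := mul_nonneg (exp_pos _).le (hf v)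
    _ = ∑' w, N.cond v w * (Real.exp (f v) * (f w - f v)) := by
      rw [laplacian, ← tsum_mul_left]
      exact tsum_congr fun w ↦ mul_left_comm _ _ _
    _ ≤ N.laplacian (fun v ↦ Real.exp (f v)) v :=
      (N.summable_cond_mul v _).tsum_le_tsum
        (fun w ↦ mul_le_mul_of_nonneg_left (exp_mul_sub_le_exp_sub_exp _ _) (N.cond_nonneg v w))
        (N.summable_cond_mul v _)

theorem IsSubharmonic.eq_of_cond_ne_zero (hN : N.IsRecurrent) (hf : N.IsSubharmonic f)
    (hbdd : BddAbove (range f)) {v w : V} (hvw : N.cond v w ≠ 0) : f w = f v := by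
  obtain ⟨M, hM⟩ := hbdd
  exact exp_injective <| hf.exp.eq_of_cond_ne_zero_of_nonneg_of_le hN (fun v ↦ (exp_pos _).le)
    (fun v ↦ exp_le_exp.2 (hM (mem_range_self v))) hvw

end Liouville

section NashWilliams

variable {r : V → ℕ}

lemma cutConductance_le {n : ℕ} {D : ℝ} (s : Finset V) (hs : ∀ v, r v = n → v ∈ s)
    (hD : ∀ v, ∑' w, N.cond v w ≤ D) : N.cutConductance r n ≤ s.card * D := by
  have hsummable : Summable fun p : V × V ↦
      N.cond p.1 p.2 * if r p.1 = n ∧ r p.2 = n + 1 then (1 : ℝ) else 0 :=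
    N.summable_cond_mul_of_finite s.finite_toSet fun p h₁ _ ↦
      if_neg fun h ↦ h₁ (hs p.1 h.1)
  rw [cutConductance, hsummable.tsum_prod, tsum_eq_sum (s := s) fun v hv ↦ ?_, ← nsmul_eq_mul]
  · refine Finset.sum_le_card_nsmul _ _ _ fun v _ ↦ le_trans ?_ (hD v)
    refine (N.summable_cond_mul v _).tsum_le_tsum (fun w ↦ ?_)
      (by simpa using N.summable_cond_mul v fun _ ↦ 1)
    exact mul_le_of_le_one_right (N.cond_nonneg v w) (by split_ifs <;> norm_num)
  · simp [mt (hs v) hv]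

lemma sq_sub_eq_sum_of_le_succ {g : ℕ → ℝ} {K : ℕ} (hg : ∀ n ≥ K, g (n + 1) = g n) {m n : ℕ}
    (hmn : n ≤ m + 1) (hnm : m ≤ n + 1) :
    (g n - g m) ^ 2 = ∑ k ∈ Finset.range K, (g (k + 1) - g k) ^ 2 *
      ((if m = k ∧ n = k + 1 then 1 else 0) + if n = k ∧ m = k + 1 then 1 else 0) := by
  have hup (m : ℕ) : (g (m + 1) - g m) ^ 2 =
      ∑ k ∈ Finset.range K, if m = k then (g (k + 1) - g k) ^ 2 else 0 := by
    rw [Finset.sum_ite_eq]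
    split_ifs with h
    · rfl
    · rw [hg m (by simpa using h), sub_self, zero_pow two_ne_zero]
  obtain rfl | rfl | rfl : m = n ∨ n = m + 1 ∨ m = n + 1 := by omega
  · rw [sub_self, zero_pow two_ne_zero, Finset.sum_eq_zero]
    intro k _
    simp only [mul_eq_zero]
    right
    rw [if_neg (by omega), add_zero]
  · rw [hup]
    refine Finset.sum_congr rfl fun k _ ↦ ?_
    rw [if_neg (c := m + 1 = k ∧ m = k + 1) (by omega)]
    simp
  · rw [← neg_sq, neg_sub, hup]
    refine Finset.sum_congr rfl fun k _ ↦ ?_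
    rw [if_neg (c := n + 1 = k ∧ n = k + 1) (by omega)]
    simp

lemma energy_radial (hr : ∀ v w, N.cond v w ≠ 0 → r w ≤ r v + 1)
    (hfin : ∀ n, {v | r v = n}.Finite) {g : ℕ → ℝ} {K : ℕ} (hg : ∀ n ≥ K, g (n + 1) = g n) :
    N.energy (fun v ↦ g (r v)) =
      2 * ∑ k ∈ Finset.range K, (g (k + 1) - g k) ^ 2 * N.cutConductance r k := by
  let χ : ℕ → V × V → ℝ := fun k p ↦ if r p.1 = k ∧ r p.2 = k + 1 then 1 else 0
  have hχ (k : ℕ) : Summable fun p : V × V ↦ N.cond p.1 p.2 * χ k p :=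
    N.summable_cond_mul_of_finite (hfin k) fun p h₁ _ ↦ if_neg fun h ↦ h₁ h.1
  have hχswap (k : ℕ) : Summable fun p : V × V ↦ N.cond p.1 p.2 * χ k p.swap :=
    N.summable_cond_mul_of_finite (hfin k) fun p _ h₂ ↦ if_neg fun h ↦ h₂ h.1
  have hedge (p : V × V) : N.cond p.1 p.2 * (g (r p.2) - g (r p.1)) ^ 2 =
      ∑ k ∈ Finset.range K, (g (k + 1) - g k) ^ 2 *
        (N.cond p.1 p.2 * χ k p + N.cond p.1 p.2 * χ k p.swap) := by
    by_cases hp : N.cond p.1 p.2 = 0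
    · simp [hp]
    · rw [sq_sub_eq_sum_of_le_succ hg (hr _ _ hp) (hr _ _ (by rwa [N.cond_symm])), Finset.mul_sum]
      refine Finset.sum_congr rfl fun k _ ↦ ?_
      rw [← mul_add, mul_left_comm]
      rfl
  rw [energy, tsum_congr hedge,
    Summable.tsum_finsetSum fun k _ ↦ ((hχ k).add (hχswap k)).mul_left _, Finset.mul_sum]
  refine Finset.sum_congr rfl fun k _ ↦ ?_
  rw [tsum_mul_left, (hχ k).tsum_add (hχswap k), N.tsum_cond_mul_swap]
  change _ * (N.cutConductance r k + N.cutConductance r k) = _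
  ring

/-- The Nash-Williams test function drops from `n` to `n + 1` by an amount proportional to the
resistance `(b n)⁻¹` of the `n`-th cut. -/
lemma exists_energy_le_of_cutConductance_le (hr : ∀ v w, N.cond v w ≠ 0 → r w ≤ r v + 1)
    (hfin : ∀ n, {v | r v = n}.Finite) {b : ℕ → ℝ} (hb : ∀ n, 0 < b n)
    (hcut : ∀ n, N.cutConductance r n ≤ b n) {K : ℕ} (hK : 0 < ∑ k ∈ Finset.range K, (b k)⁻¹) :
    ∃ φ : V → ℝ, φ.support.Finite ∧ (∀ v, r v = 0 → φ v = 1) ∧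
      N.energy φ ≤ 2 / ∑ k ∈ Finset.range K, (b k)⁻¹ := by
  let R : ℕ → ℝ := fun n ↦ ∑ k ∈ Finset.range n, (b k)⁻¹
  let g : ℕ → ℝ := fun n ↦ 1 - R (min n K) / R K
  have hg_zero {n : ℕ} (hn : K ≤ n) : g n = 0 := by
    simp only [g, min_eq_right hn, div_self hK.ne', R, sub_self]
  have hg_step {n : ℕ} (hn : n < K) : (g (n + 1) - g n) ^ 2 = (b n)⁻¹ ^ 2 / R K ^ 2 := by
    simp only [g, R, min_eq_left hn.le, min_eq_left (Nat.succ_le_of_lt hn),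
      Finset.sum_range_succ _ n]
    ring
  refine ⟨fun v ↦ g (r v), ?_, fun v hv ↦ by simp [g, R, hv], ?_⟩
  · refine ((finite_lt_nat K).biUnion fun n _ ↦ hfin n).subset fun v hv ↦ ?_
    exact mem_biUnion (not_le.1 fun h ↦ hv (hg_zero h)) rfl
  · rw [N.energy_radial hr hfin fun n hn ↦ by rw [hg_zero hn, hg_zero (hn.trans n.le_succ)]]
    calc 2 * ∑ k ∈ Finset.range K, (g (k + 1) - g k) ^ 2 * N.cutConductance r k
        ≤ 2 * ∑ k ∈ Finset.range K, (b k)⁻¹ / R K ^ 2 := by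
          gcongr with k hk
          rw [hg_step (Finset.mem_range.1 hk)]
          refine (mul_le_mul_of_nonneg_left (hcut k) (by positivity)).trans_eq ?_
          have := (hb k).ne'
          field_simp
      _ = 2 / R K := by
          rw [← Finset.sum_div]
          change 2 * (R K / R K ^ 2) = _
          have : R K ≠ 0 := hK.ne'
          field_simp

end NashWilliams

end Network

/-- The sup norm on `ℤ × ℤ`, with values in `ℕ` so that its spheres are the sets `Finset.box n`. -/
def gridNorm (v : ℤ × ℤ) : ℕ := max v.1.natAbs v.2.natAbs

lemma card_box_le (n : ℕ) : (Finset.box n : Finset (ℤ × ℤ)).card ≤ 8 * (n + 1) := by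
  obtain rfl | hn := eq_or_ne n 0
  · simp
  · rw [Int.card_box hn]
    omega

theorem Network.isRecurrent_of_gridNorm_le_one (N : Network (ℤ × ℤ)) {D : ℝ}
    (hrange : ∀ v w, N.cond v w ≠ 0 → gridNorm (w - v) ≤ 1) (hD : ∀ v, ∑' w, N.cond v w ≤ D) :
    N.IsRecurrent := by
  intro v₀ ε hε
  let sphere : ℕ → Finset (ℤ × ℤ) := fun n ↦ (Finset.box n).map (Equiv.addRight v₀).toEmbedding
  have mem_sphere (n : ℕ) (v : ℤ × ℤ) : gridNorm (v - v₀) = n ↔ v ∈ sphere n := by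
    simp [sphere, gridNorm, sub_eq_add_neg]
  have hD0 : 0 ≤ D := (tsum_nonneg (N.cond_nonneg v₀)).trans (hD v₀)
  let b : ℕ → ℝ := fun n ↦ 8 * (D + 1) * (n + 1)
  have hcut (n : ℕ) : N.cutConductance (fun v ↦ gridNorm (v - v₀)) n ≤ b n := by
    refine (N.cutConductance_le (sphere n) (fun v ↦ (mem_sphere n v).1) hD).trans ?_
    have hcard : ((sphere n).card : ℝ) ≤ 8 * (n + 1) := by
      rw [Finset.card_map]
      exact_mod_cast card_box_le n
    nlinarith
  have hdiv : Filter.Tendsto (fun n ↦ ∑ k ∈ Finset.range n, (b k)⁻¹) Filter.atTop Filter.atTop := by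
    have hharmonic := Real.tendsto_sum_range_one_div_nat_succ_atTop.const_mul_atTop
      (show 0 < (8 * (D + 1))⁻¹ by positivity)
    simpa only [b, mul_inv, one_div, Finset.mul_sum] using hharmonic
  obtain ⟨K, hK⟩ := (hdiv.eventually_ge_atTop (2 / ε)).exists
  have hpos : 0 < ∑ k ∈ Finset.range K, (b k)⁻¹ := (by positivity : 0 < 2 / ε).trans_le hK
  obtain ⟨φ, hφ, hφ₀, henergy⟩ := N.exists_energy_le_of_cutConductance_le
    (r := fun v ↦ gridNorm (v - v₀))
    (fun v w hvw ↦ by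
      have := hrange v w hvw
      simp only [gridNorm, Prod.fst_sub, Prod.snd_sub] at this ⊢
      omega)
    (fun n ↦ (sphere n).finite_toSet.subset fun v hv ↦ (mem_sphere n v).1 hv)
    (fun n ↦ by positivity) hcut hpos
  exact ⟨φ, hφ, hφ₀ v₀ (by simp [gridNorm]), henergy.trans ((div_le_comm₀ hε hpos).1 hK)⟩

/-! ### Triangles of tangent circles -/

/-- For mutually externally tangent circles of radii `a`, `b`, `c`, the angle at the center of the
first one in the triangle of centers. -/
noncomputable def tangentAngle (a b c : ℝ) : ℝ :=
  arccos (1 - 2 * b * c / ((a + b) * (a + c)))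

/-- For mutually externally tangent circles of radii `a`, `b`, `c`, the inradius of the triangle of
centers divided by the length `a + b` of the side joining the first two. It is the derivative of
`tangentAngle a b c` with respect to `log b`. -/
noncomputable def tangentConductance (a b c : ℝ) : ℝ := √(a * b * c / (a + b + c)) / (a + b)

section TangentTriangle

variable {a b c : ℝ}

lemma tangentConductance_comm (a b c : ℝ) :
    tangentConductance a b c = tangentConductance b a c := by
  rw [tangentConductance, tangentConductance, mul_comm a b, add_comm a b]

lemma tangentConductance_pos (ha : 0 < a) (hb : 0 < b) (hc : 0 < c) :
    0 < tangentConductance a b c := by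
  unfold tangentConductance
  positivity

lemma tangentConductance_le_half (ha : 0 < a) (hb : 0 < b) (hc : 0 < c) :
    tangentConductance a b c ≤ 1 / 2 := by
  rw [tangentConductance, div_le_iff₀ (by positivity), sqrt_le_iff, div_le_iff₀ (by positivity)]
  refine ⟨by positivity, ?_⟩
  nlinarith [mul_nonneg hc.le (sq_nonneg (a - b)), pow_pos (add_pos ha hb) 3]

lemma sqrt_one_sub_tangentAngle_cos_sq (ha : 0 < a) (hb : 0 < b) (hc : 0 < c) :
    √(1 - (1 - 2 * b * c / ((a + b) * (a + c))) ^ 2) =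
      2 * √(a * b * c / (a + b + c)) * (a + b + c) / ((a + b) * (a + c)) := by
  rw [sqrt_eq_iff_mul_self_eq_of_pos (by positivity), ← sq, div_pow, mul_pow, mul_pow,
    sq_sqrt (by positivity)]
  field_simp
  ring

lemma tangentAngle_cos_mem_Ioo (ha : 0 < a) (hb : 0 < b) (hc : 0 < c) :
    1 - 2 * b * c / ((a + b) * (a + c)) ∈ Ioo (-1 : ℝ) 1 := by
  have hpos : 0 < 2 * b * c / ((a + b) * (a + c)) := by positivity
  have hlt : 2 * b * c / ((a + b) * (a + c)) < 2 := by
    rw [div_lt_iff₀ (by positivity)]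
    nlinarith [mul_pos ha hb, mul_pos ha hc, mul_pos ha ha]
  constructor <;> linarith

lemma hasDerivAt_tangentAngle {A B C : ℝ → ℝ} {f g h t : ℝ} (hA : HasDerivAt A (A t * f) t)
    (hB : HasDerivAt B (B t * g) t) (hC : HasDerivAt C (C t * h) t) (ha : 0 < A t) (hb : 0 < B t)
    (hc : 0 < C t) :
    HasDerivAt (fun s ↦ tangentAngle (A s) (B s) (C s))
      (tangentConductance (A t) (B t) (C t) * (g - f) +
        tangentConductance (A t) (C t) (B t) * (h - f)) t := by
  have hcos := (((hB.const_mul 2).mul hC).div ((hA.add hB).mul (hA.add hC))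
    (by simp only [Pi.add_apply, Pi.mul_apply]; positivity)).const_sub 1
  obtain ⟨hgt, hlt⟩ := tangentAngle_cos_mem_Ioo ha hb hc
  refine ((hasDerivAt_arccos hgt.ne' hlt.ne).comp t hcos).congr_deriv ?_
  simp only [Pi.add_apply, Pi.mul_apply, sqrt_one_sub_tangentAngle_cos_sq ha hb hc,
    tangentConductance, mul_right_comm (A t) (C t), add_right_comm (A t) (C t)]
  have hinradius_pos : 0 < √(A t * B t * C t / (A t + B t + C t)) := by positivity
  have hinradius_sq : √(A t * B t * C t / (A t + B t + C t)) ^ 2 =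
      A t * B t * C t / (A t + B t + C t) := sq_sqrt (by positivity)
  generalize √(A t * B t * C t / (A t + B t + C t)) = s at *
  field_simp at hinradius_sq ⊢
  linear_combination
    -((g - f) * (A t + C t) + (A t + B t) * (h - f)) * hinradius_sq

end TangentTriangle

/-- The geometric interpolation `ρ ^ (1 - t) * σ ^ t` between two labels. -/
noncomputable def labelPath {V : Type*} (ρ σ : V → ℝ) (t : ℝ) (v : V) : ℝ :=
  ρ v * (σ v / ρ v) ^ t

/-- The conductance which the face `p q s` contributes to its edge `p q` in the comparison of the
labels `ρ` and `σ`: the mean of `tangentConductance` along `labelPath ρ σ`. -/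
noncomputable def faceConductance {V : Type*} (ρ σ : V → ℝ) (p q s : V) : ℝ :=
  ∫ t in (0 : ℝ)..1,
    tangentConductance (labelPath ρ σ t p) (labelPath ρ σ t q) (labelPath ρ σ t s)

section LabelledFace

variable {V : Type*} {ρ σ : V → ℝ}

lemma faceConductance_comm (ρ σ : V → ℝ) (p q s : V) :
    faceConductance ρ σ p q s = faceConductance ρ σ q p s := by
  simp only [faceConductance, tangentConductance_comm (labelPath ρ σ _ p)]

lemma labelPath_pos (hρ : ∀ v, 0 < ρ v) (hσ : ∀ v, 0 < σ v) (t : ℝ) (v : V) :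
    0 < labelPath ρ σ t v :=
  mul_pos (hρ v) (rpow_pos_of_pos (div_pos (hσ v) (hρ v)) t)

lemma hasDerivAt_labelPath (hρ : ∀ v, 0 < ρ v) (hσ : ∀ v, 0 < σ v) (t : ℝ) (v : V) :
    HasDerivAt (fun t ↦ labelPath ρ σ t v) (labelPath ρ σ t v * log (σ v / ρ v)) t := by
  have h := ((hasStrictDerivAt_const_rpow (div_pos (hσ v) (hρ v)) t).hasDerivAt).const_mul (ρ v)
  exact h.congr_deriv (mul_assoc _ _ _).symm

lemma continuous_tangentConductance_labelPath (hρ : ∀ v, 0 < ρ v) (hσ : ∀ v, 0 < σ v)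
    (p q s : V) :
    Continuous fun t ↦
      tangentConductance (labelPath ρ σ t p) (labelPath ρ σ t q) (labelPath ρ σ t s) := by
  have hcont (v : V) : Continuous fun t ↦ labelPath ρ σ t v :=
    continuous_iff_continuousAt.2 fun t ↦ (hasDerivAt_labelPath hρ hσ t v).continuousAt
  have hpos := labelPath_pos hρ hσ
  refine ((((hcont p).mul (hcont q)).mul (hcont s)).div
    (((hcont p).add (hcont q)).add (hcont s)) fun t ↦ ?_).sqrt.div
    ((hcont p).add (hcont q)) fun t ↦ ?_
  · exact (add_pos (add_pos (hpos t p) (hpos t q)) (hpos t s)).ne'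
  · exact (add_pos (hpos t p) (hpos t q)).ne'

lemma faceConductance_pos (hρ : ∀ v, 0 < ρ v) (hσ : ∀ v, 0 < σ v) (p q s : V) :
    0 < faceConductance ρ σ p q s :=
  intervalIntegral.intervalIntegral_pos_of_pos
    ((continuous_tangentConductance_labelPath hρ hσ p q s).intervalIntegrable 0 1)
    (fun t ↦ tangentConductance_pos (labelPath_pos hρ hσ t p) (labelPath_pos hρ hσ t q)
      (labelPath_pos hρ hσ t s)) one_pos

lemma faceConductance_le_half (hρ : ∀ v, 0 < ρ v) (hσ : ∀ v, 0 < σ v) (p q s : V) :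
    faceConductance ρ σ p q s ≤ 1 / 2 := by
  have h := intervalIntegral.integral_mono_on zero_le_one
    ((continuous_tangentConductance_labelPath hρ hσ p q s).intervalIntegrable 0 1)
    (intervalIntegrable_const (c := (1 / 2 : ℝ)) (μ := MeasureTheory.volume))
    fun t _ ↦ tangentConductance_le_half (labelPath_pos hρ hσ t p) (labelPath_pos hρ hσ t q)
      (labelPath_pos hρ hσ t s)
  simpa [faceConductance] using h

lemma tangentAngle_sub_tangentAngle (hρ : ∀ v, 0 < ρ v) (hσ : ∀ v, 0 < σ v)
    (p q s : V) :
    tangentAngle (σ p) (σ q) (σ s) - tangentAngle (ρ p) (ρ q) (ρ s) =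
      faceConductance ρ σ p q s * (log (σ q / ρ q) - log (σ p / ρ p)) +
        faceConductance ρ σ p s q * (log (σ s / ρ s) - log (σ p / ρ p)) := by
  have hpos := labelPath_pos hρ hσ
  have hderiv := hasDerivAt_labelPath hρ hσ
  have hpq := ((continuous_tangentConductance_labelPath hρ hσ p q s).mul_const
    (log (σ q / ρ q) - log (σ p / ρ p))).intervalIntegrable (μ := MeasureTheory.volume) 0 1
  have hps := ((continuous_tangentConductance_labelPath hρ hσ p s q).mul_const
    (log (σ s / ρ s) - log (σ p / ρ p))).intervalIntegrable (μ := MeasureTheory.volume) 0 1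
  have hftc := intervalIntegral.integral_eq_sub_of_hasDerivAt
    (fun t _ ↦ hasDerivAt_tangentAngle (hderiv t p) (hderiv t q) (hderiv t s)
      (hpos t p) (hpos t q) (hpos t s)) (hpq.add hps)
  have hzero (v : V) : labelPath ρ σ 0 v = ρ v := by simp [labelPath]
  have hone (v : V) : labelPath ρ σ 1 v = σ v := by
    rw [labelPath, rpow_one, mul_div_cancel₀ _ (hρ v).ne']
  rw [intervalIntegral.integral_add hpq hps, intervalIntegral.integral_mul_const,
    intervalIntegral.integral_mul_const] at hftc
  simpa only [hzero, hone, faceConductance] using hftc.symm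

end LabelledFace

/-! ### The triangular lattice -/

/-- Coordinates on the triangular lattice. -/
noncomputable def hexPoint (v : ℤ × ℤ) : ℂ := v.1 + v.2 * hexω

/-- Multiplication by `ω` in the coordinates `hexPoint`. -/
def hexRot : ℤ × ℤ ≃ ℤ × ℤ where
  toFun v := (-v.2, v.1 + v.2)
  invFun v := (v.1 + v.2, -v.1)
  left_inv v := by ext <;> simp
  right_inv v := by ext <;> simp

/-- The sixth roots of unity `ω ^ k` in the coordinates `hexPoint`. -/
def hexSteps : Finset (ℤ × ℤ) := (Finset.range 6).image fun k ↦ hexRot^[k] (1, 0)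

/-- The angle sum of a label given in the coordinates `hexPoint`. -/
noncomputable def gridAngleSum (ρ : ℤ × ℤ → ℝ) (v : ℤ × ℤ) : ℝ :=
  ∑ d ∈ hexSteps, tangentAngle (ρ v) (ρ (v + d)) (ρ (v + hexRot d))

lemma hexω_cube : hexω ^ 3 = -1 := by
  rw [hexω, ← Complex.exp_nat_mul, ← Complex.exp_pi_mul_I]
  congr 1
  push_cast
  ring

lemma hexω_re : hexω.re = 1 / 2 := by
  have hcast : (π / 3 : ℂ) = ((π / 3 : ℝ) : ℂ) := by push_cast; rfl
  rw [hexω, hcast, Complex.exp_ofReal_mul_I_re, cos_pi_div_three]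

lemma hexω_sq : hexω ^ 2 = hexω - 1 := by
  have hne : hexω + 1 ≠ 0 := fun h ↦ by
    have hre := congrArg Complex.re h
    rw [Complex.add_re, hexω_re, Complex.one_re, Complex.zero_re] at hre
    norm_num at hre
  refine mul_left_cancel₀ hne ?_
  linear_combination hexω_cube

lemma hexPoint_hexRot (v : ℤ × ℤ) : hexPoint (hexRot v) = hexω * hexPoint v := by
  simp only [hexPoint, hexRot, Equiv.coe_fn_mk]
  push_cast
  linear_combination -(v.2 : ℂ) * hexω_sq

lemma hexPoint_add_iterate_hexRot (v : ℤ × ℤ) (k : ℕ) :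
    hexPoint (v + hexRot^[k] (1, 0)) = hexPoint v + hexω ^ k := by
  have hadd (d : ℤ × ℤ) : hexPoint (v + d) = hexPoint v + hexPoint d := by
    simp only [hexPoint, Prod.fst_add, Prod.snd_add]
    push_cast
    ring
  have hpow : hexPoint (hexRot^[k] (1, 0)) = hexω ^ k := by
    induction k with
    | zero => simp [hexPoint]
    | succ k ih => rw [Function.iterate_succ_apply', hexPoint_hexRot, ih, pow_succ']
  rw [hadd, hpow]

lemma hexAngleSum_hexPoint (ρ : ℂ → ℝ) (v : ℤ × ℤ) :
    hexAngleSum ρ (hexPoint v) = gridAngleSum (fun v ↦ ρ (hexPoint v)) v := by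
  have hinj : ∀ j ∈ Finset.range 6, ∀ k ∈ Finset.range 6,
      hexRot^[j] (1, 0) = hexRot^[k] (1, 0) → j = k := by decide
  rw [gridAngleSum, hexSteps, Finset.sum_image hinj]
  simp only [← Function.iterate_succ_apply', hexPoint_add_iterate_hexRot]
  rfl

lemma sum_hexSteps_comp_hexRot (F : ℤ × ℤ → ℝ) :
    ∑ d ∈ hexSteps, F (hexRot d) = ∑ d ∈ hexSteps, F d := by
  have hmap : hexSteps.map hexRot.toEmbedding = hexSteps := by decide
  simpa [hmap] using (Finset.sum_map hexSteps hexRot.toEmbedding F).symm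

lemma add_hexRot_sub (v w : ℤ × ℤ) : w + hexRot (v - w) = v + hexRot.symm (w - v) := by
  ext <;> simp [hexRot] <;> ring

lemma add_hexRot_symm_sub (v w : ℤ × ℤ) : w + hexRot.symm (v - w) = v + hexRot (w - v) := by
  ext <;> simp [hexRot] <;> ring

lemma neg_mem_hexSteps_iff {d : ℤ × ℤ} : -d ∈ hexSteps ↔ d ∈ hexSteps := by
  have hneg : ∀ d ∈ hexSteps, -d ∈ hexSteps := by decide
  exact ⟨fun h ↦ neg_neg d ▸ hneg _ h, hneg d⟩

/-- The network on the triangular lattice comparing the labels `ρ` and `σ`. The conductance of an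
edge is the sum of the contributions of the two faces containing it. -/
noncomputable def hexNetwork (ρ σ : ℤ × ℤ → ℝ) (hρ : ∀ v, 0 < ρ v) (hσ : ∀ v, 0 < σ v) :
    Network (ℤ × ℤ) where
  cond v w :=
    if w - v ∈ hexSteps then
      faceConductance ρ σ v w (v + hexRot (w - v)) +
        faceConductance ρ σ v w (v + hexRot.symm (w - v))
    else 0
  cond_nonneg v w := by
    split_ifs
    · exact (add_pos (faceConductance_pos hρ hσ _ _ _) (faceConductance_pos hρ hσ _ _ _)).le
    · exact le_rfl
  cond_symm v w := by
    have hiff : w - v ∈ hexSteps ↔ v - w ∈ hexSteps := by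
      rw [← neg_sub w v]
      exact neg_mem_hexSteps_iff.symm
    simp only [hiff, add_hexRot_sub v w, add_hexRot_symm_sub v w, faceConductance_comm ρ σ w v,
      add_comm (faceConductance ρ σ v w (v + hexRot (w - v)))]
  finite_support_cond v := by
    refine (hexSteps.finite_toSet.preimage (f := (· - v)) sub_left_injective.injOn).subset ?_
    intro w hw
    by_contra h
    exact hw (if_neg h)

section HexNetwork

variable {ρ σ : ℤ × ℤ → ℝ} {hρ : ∀ v, 0 < ρ v} {hσ : ∀ v, 0 < σ v}

lemma hexNetwork_cond_add {d : ℤ × ℤ} (hd : d ∈ hexSteps) (v : ℤ × ℤ) :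
    (hexNetwork ρ σ hρ hσ).cond v (v + d) =
      faceConductance ρ σ v (v + d) (v + hexRot d) +
        faceConductance ρ σ v (v + d) (v + hexRot.symm d) := by
  simp [hexNetwork, hd]

lemma sub_mem_hexSteps_of_cond_ne_zero {v w : ℤ × ℤ}
    (hvw : (hexNetwork ρ σ hρ hσ).cond v w ≠ 0) : w - v ∈ hexSteps := by
  by_contra h
  exact hvw (if_neg h)

lemma tsum_hexNetwork_cond_mul (v : ℤ × ℤ) (g : ℤ × ℤ → ℝ) :
    ∑' w, (hexNetwork ρ σ hρ hσ).cond v w * g w =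
      ∑ d ∈ hexSteps, (hexNetwork ρ σ hρ hσ).cond v (v + d) * g (v + d) := by
  rw [← (Equiv.addLeft v).tsum_eq]
  refine tsum_eq_sum fun d hd ↦ mul_eq_zero_of_left ?_ _
  contrapose! hd
  simpa using sub_mem_hexSteps_of_cond_ne_zero hd

lemma laplacian_hexNetwork_log_div (v : ℤ × ℤ) :
    (hexNetwork ρ σ hρ hσ).laplacian (fun v ↦ log (σ v / ρ v)) v =
      gridAngleSum σ v - gridAngleSum ρ v := by
  let u : ℤ × ℤ → ℝ := fun v ↦ log (σ v / ρ v)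
  let ccwFace : ℤ × ℤ → ℝ := fun d ↦
    faceConductance ρ σ v (v + d) (v + hexRot d) * (u (v + d) - u v)
  let cwFace : ℤ × ℤ → ℝ := fun d ↦
    faceConductance ρ σ v (v + d) (v + hexRot.symm d) * (u (v + d) - u v)
  calc (hexNetwork ρ σ hρ hσ).laplacian u v = ∑ d ∈ hexSteps, (ccwFace d + cwFace d) := by
        rw [Network.laplacian, tsum_hexNetwork_cond_mul]
        exact Finset.sum_congr rfl fun d hd ↦ by rw [hexNetwork_cond_add hd, add_mul]
    _ = ∑ d ∈ hexSteps, (ccwFace d + cwFace (hexRot d)) := by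
        rw [Finset.sum_add_distrib, Finset.sum_add_distrib, sum_hexSteps_comp_hexRot]
    _ = gridAngleSum σ v - gridAngleSum ρ v := by
        rw [gridAngleSum, gridAngleSum, ← Finset.sum_sub_distrib]
        refine Finset.sum_congr rfl fun d _ ↦ ?_
        rw [tangentAngle_sub_tangentAngle hρ hσ]
        simp only [ccwFace, cwFace, u, Equiv.symm_apply_apply]

lemma hexNetwork_isRecurrent : (hexNetwork ρ σ hρ hσ).IsRecurrent := by
  refine Network.isRecurrent_of_gridNorm_le_one (D := 6) _ (fun v w hvw ↦ ?_) fun v ↦ ?_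
  · have hsteps : ∀ d ∈ hexSteps, gridNorm d ≤ 1 := by decide
    exact hsteps _ (sub_mem_hexSteps_of_cond_ne_zero hvw)
  · have hsum := tsum_hexNetwork_cond_mul (hρ := hρ) (hσ := hσ) v fun _ ↦ 1
    simp only [mul_one] at hsum
    have hle : ∀ d ∈ hexSteps, (hexNetwork ρ σ hρ hσ).cond v (v + d) ≤ 1 := fun d hd ↦ by
      rw [hexNetwork_cond_add hd]
      linarith [faceConductance_le_half hρ hσ v (v + d) (v + hexRot d),
        faceConductance_le_half hρ hσ v (v + d) (v + hexRot.symm d)]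
    rw [hsum]
    have hcard : hexSteps.card = 6 := by decide
    exact (Finset.sum_le_card_nsmul _ _ _ hle).trans_eq (by simp [hcard])

lemma hexNetwork_cond_add_ne_zero {d : ℤ × ℤ} (hd : d ∈ hexSteps) (v : ℤ × ℤ) :
    (hexNetwork ρ σ hρ hσ).cond v (v + d) ≠ 0 := by
  rw [hexNetwork_cond_add hd]
  exact (add_pos (faceConductance_pos hρ hσ _ _ _) (faceConductance_pos hρ hσ _ _ _)).ne'

end HexNetwork

lemma eq_apply_zero_of_periodic {α : Type*} {f : ℤ × ℤ → α} (h₁ : Function.Periodic f (1, 0))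
    (h₂ : Function.Periodic f (0, 1)) (v : ℤ × ℤ) : f v = f 0 := by
  simpa using ((h₁.zsmul v.1).add_period (h₂.zsmul v.2)).eq

theorem div_eq_div_zero_of_gridAngleSum_le {ρ σ : ℤ × ℤ → ℝ} {M : ℝ} (hρ : ∀ v, 0 < ρ v)
    (hσ : ∀ v, 0 < σ v) (hsub : ∀ v, gridAngleSum ρ v ≤ gridAngleSum σ v)
    (hM : ∀ v, σ v / ρ v ≤ M) (v : ℤ × ℤ) : σ v / ρ v = σ 0 / ρ 0 := by
  let u : ℤ × ℤ → ℝ := fun v ↦ log (σ v / ρ v)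
  have hratio (v : ℤ × ℤ) : 0 < σ v / ρ v := div_pos (hσ v) (hρ v)
  have hu : (hexNetwork ρ σ hρ hσ).IsSubharmonic u := fun v ↦ by
    rw [laplacian_hexNetwork_log_div]
    exact sub_nonneg.2 (hsub v)
  have hbdd : BddAbove (range u) :=
    ⟨log M, forall_mem_range.2 fun v ↦ log_le_log (hratio v) (hM v)⟩
  have hperiodic (d : ℤ × ℤ) (hd : d ∈ hexSteps) : Function.Periodic u d := fun v ↦
    hu.eq_of_cond_ne_zero hexNetwork_isRecurrent hbdd (hexNetwork_cond_add_ne_zero hd v)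
  exact log_injOn_pos (hratio v) (hratio 0)
    (eq_apply_zero_of_periodic (hperiodic _ (by decide)) (hperiodic _ (by decide)) v)

/-- Theorem 3.1 for the hexagonal complex: if the labelled complex `K(σ)`
(`σ` playing the role of `ρ̃`) is a subpacking for the angle sum function of
`K(ρ)`, then the ratio `A = σ/ρ` is bounded above iff it is constant. -/
theorem hex_subpacking_ratio_bounded_iff_const
    (ρ σ : ℂ → ℝ)
    (hρ : ∀ v ∈ hexLattice, 0 < ρ v)
    (hσ : ∀ v ∈ hexLattice, 0 < σ v)
    (hsub : ∀ v ∈ hexLattice, hexAngleSum ρ v ≤ hexAngleSum σ v) :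
    (∃ M : ℝ, ∀ v ∈ hexLattice, σ v / ρ v ≤ M) ↔
      (∃ c : ℝ, ∀ v ∈ hexLattice, σ v / ρ v = c) := by
  constructor
  · rintro ⟨M, hM⟩
    have hmem (v : ℤ × ℤ) : hexPoint v ∈ hexLattice := ⟨v.1, v.2, rfl⟩
    have hgrid (v : ℤ × ℤ) : gridAngleSum (fun v ↦ ρ (hexPoint v)) v ≤
        gridAngleSum (fun v ↦ σ (hexPoint v)) v := by
      simpa only [hexAngleSum_hexPoint] using hsub _ (hmem v)
    refine ⟨σ (hexPoint 0) / ρ (hexPoint 0), ?_⟩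
    rintro _ ⟨a, b, rfl⟩
    exact div_eq_div_zero_of_gridAngleSum_le (fun v ↦ hρ _ (hmem v)) (fun v ↦ hσ _ (hmem v))
      hgrid (fun v ↦ hM _ (hmem v)) (a, b)
  · rintro ⟨c, hc⟩
    exact ⟨c, fun v hv ↦ (hc v hv).le⟩
end

section
/- Let m ≥ 3 and let ρ_1, ρ_2 : {0,1,…,m} → (0,∞) be two labels of a star, with 0 the center and 1,…,m the boundary vertices in cyclic order (indices among 1,…,m taken mod m). For j = 1,2 let Θ_j = Σ_{i=1}^{m} arccos( 1 − 2ρ_j(i)ρ_j(i+1) / ((ρ_j(0)+ρ_j(i))(ρ_j(0)+ρ_j(i+1))) ) be the angle sum at the center. If Θ_2 ≥ Θ_1 and ρ_2(i)/ρ_1(i) ≤ ρ_2(0)/ρ_1(0) for every i ∈ {1,…,m}, then ρ_2(i)/ρ_1(i) = ρ_2(0)/ρ_1(0) for every i ∈ {1,…,m}. -/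
open Real Finset

/-!
The angle of a triple of tangent circles is invariant under scaling the three radii, and it strictly
increases with each of the two outer radii. Scaling `ρ₁` by `t = ρ₂ 0 / ρ₁ 0` therefore keeps its
angle sum and makes the two center labels equal, while the maximum condition becomes `ρ₂ ≤ t * ρ₁`
on the boundary. By monotonicity each angle of `ρ₂` is at most the corresponding angle of
`t * ρ₁`; since the sums compare the other way round, all these angles agree, and strictness forces
`ρ₂ = t * ρ₁`.
-/

/-- The angle at the center of the circle of radius `a` in the triangle formed by the centers of
three mutually externally tangent circles of radii `a`, `b`, `c`, as given by the law of cosines.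
The radii are meant to be positive, but `b` and `c` may degenerate to `0`. -/
noncomputable def tangencyAngle (a b c : ℝ) : ℝ :=
  arccos (1 - 2 * b * c / ((a + b) * (a + c)))

theorem tangencyAngle_comm (a b c : ℝ) : tangencyAngle a b c = tangencyAngle a c b := by
  unfold tangencyAngle
  rw [mul_right_comm, mul_comm (a + b)]

theorem tangencyAngle_mul_mul_mul {t : ℝ} (ht : t ≠ 0) (a b c : ℝ) :
    tangencyAngle (t * a) (t * b) (t * c) = tangencyAngle a b c := by
  have scale_num : 2 * (t * b) * (t * c) = t * t * (2 * b * c) := by ring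
  have scale_den : (t * a + t * b) * (t * a + t * c) = t * t * ((a + b) * (a + c)) := by ring
  unfold tangencyAngle
  rw [scale_num, scale_den, mul_div_mul_left _ _ (mul_ne_zero ht ht)]

theorem strictMonoOn_div_add_self {a : ℝ} (ha : 0 < a) :
    StrictMonoOn (fun b : ℝ ↦ b / (a + b)) (Set.Ici 0) := by
  intro b (hb : 0 ≤ b) b' (hb' : 0 ≤ b') hlt
  change b / (a + b) < b' / (a + b')
  rw [div_lt_div_iff₀ (by positivity) (by positivity)]
  linarith [mul_lt_mul_of_pos_left hlt ha]

theorem div_add_self_mem_Icc {a b : ℝ} (ha : 0 ≤ a) (hb : 0 ≤ b) :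
    b / (a + b) ∈ Set.Icc (0 : ℝ) 1 :=
  ⟨by positivity, div_le_one_of_le₀ (by linarith) (by positivity)⟩

theorem tangencyAngle_eq_arccos_mul (a b c : ℝ) :
    tangencyAngle a b c = arccos (1 - 2 * (b / (a + b) * (c / (a + c)))) := by
  rw [tangencyAngle, div_mul_div_comm, mul_assoc, mul_div_assoc]

theorem strictMonoOn_tangencyAngle_left {a c : ℝ} (ha : 0 < a) (hc : 0 < c) :
    StrictMonoOn (fun b ↦ tangencyAngle a b c) (Set.Ici 0) := by
  have cos_mem {b : ℝ} (hb : 0 ≤ b) :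
      1 - 2 * (b / (a + b) * (c / (a + c))) ∈ Set.Icc (-1 : ℝ) 1 := by
    obtain ⟨h_nonneg, h_le_one⟩ := unitInterval.mul_mem
      (div_add_self_mem_Icc ha.le hb) (div_add_self_mem_Icc ha.le hc.le)
    constructor <;> linarith
  intro b hb b' hb' hlt
  simp only [tangencyAngle_eq_arccos_mul]
  apply strictAntiOn_arccos (cos_mem hb') (cos_mem hb)
  have : b / (a + b) * (c / (a + c)) < b' / (a + b') * (c / (a + c)) :=
    mul_lt_mul_of_pos_right (strictMonoOn_div_add_self ha hb hb' hlt) (by positivity)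
  linarith

theorem strictMonoOn_tangencyAngle_right {a b : ℝ} (ha : 0 < a) (hb : 0 < b) :
    StrictMonoOn (fun c ↦ tangencyAngle a b c) (Set.Ici 0) := by
  simpa only [tangencyAngle_comm a b] using strictMonoOn_tangencyAngle_left ha hb

section Comparison

variable {a b b' c c' : ℝ}

theorem tangencyAngle_le_tangencyAngle (ha : 0 < a) (hb : 0 < b) (hc : 0 < c)
    (hbb' : b ≤ b') (hcc' : c ≤ c') : tangencyAngle a b c ≤ tangencyAngle a b' c' :=
  have hb' : 0 < b' := hb.trans_le hbb'
  calc
    tangencyAngle a b c ≤ tangencyAngle a b' c :=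
      (strictMonoOn_tangencyAngle_left ha hc).monotoneOn hb.le hb'.le hbb'
    _ ≤ tangencyAngle a b' c' :=
      (strictMonoOn_tangencyAngle_right ha hb').monotoneOn hc.le (hc.le.trans hcc') hcc'

theorem eq_left_of_tangencyAngle_eq (ha : 0 < a) (hb : 0 < b) (hc : 0 < c)
    (hbb' : b ≤ b') (hcc' : c ≤ c') (h : tangencyAngle a b c = tangencyAngle a b' c') :
    b = b' := by
  have hb' : 0 < b' := hb.trans_le hbb'
  have angle_le : tangencyAngle a b' c ≤ tangencyAngle a b c :=
    h ▸ tangencyAngle_le_tangencyAngle ha hb' hc le_rfl hcc'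
  exact hbb'.antisymm
    ((strictMonoOn_tangencyAngle_left ha hc).le_iff_le hb'.le hb.le |>.1 angle_le)

theorem tangencyAngle_eq_iff_of_le (ha : 0 < a) (hb : 0 < b) (hc : 0 < c)
    (hbb' : b ≤ b') (hcc' : c ≤ c') :
    tangencyAngle a b c = tangencyAngle a b' c' ↔ b = b' ∧ c = c' := by
  refine ⟨fun h ↦ ⟨eq_left_of_tangencyAngle_eq ha hb hc hbb' hcc' h, ?_⟩, ?_⟩
  · rw [tangencyAngle_comm a b, tangencyAngle_comm a b'] at h
    exact eq_left_of_tangencyAngle_eq ha hc hb hcc' hbb' h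
  · rintro ⟨rfl, rfl⟩
    rfl

end Comparison

section Flower

variable {V ι : Type*} {faces : Finset ι} {link : Set V} {u v : ι → V}

theorem eq_of_sum_tangencyAngle_le {a : ℝ} {r r' : V → ℝ}
    (hu : ∀ f ∈ faces, u f ∈ link) (hv : ∀ f ∈ faces, v f ∈ link)
    (ha : 0 < a) (hr : ∀ x ∈ link, 0 < r x) (hle : ∀ x ∈ link, r x ≤ r' x)
    (hsum : ∑ f ∈ faces, tangencyAngle a (r' (u f)) (r' (v f)) ≤
      ∑ f ∈ faces, tangencyAngle a (r (u f)) (r (v f))) :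
    ∀ f ∈ faces, r (u f) = r' (u f) ∧ r (v f) = r' (v f) := by
  have angle_le : ∀ f ∈ faces,
      tangencyAngle a (r (u f)) (r (v f)) ≤ tangencyAngle a (r' (u f)) (r' (v f)) :=
    fun f hf ↦ tangencyAngle_le_tangencyAngle ha (hr _ (hu f hf)) (hr _ (hv f hf))
      (hle _ (hu f hf)) (hle _ (hv f hf))
  have angle_eq := (sum_eq_sum_iff_of_le angle_le).1 ((sum_le_sum angle_le).antisymm hsum)
  exact fun f hf ↦ (tangencyAngle_eq_iff_of_le ha (hr _ (hu f hf)) (hr _ (hv f hf))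
    (hle _ (hu f hf)) (hle _ (hv f hf))).1 (angle_eq f hf)

/-- The face `f` is the triangle with vertices `o`, `u f`, `v f`; the edges from `u f` to `v f` need
not form a cycle. -/
theorem star_maximum_principle_general {o : V} {ρ₁ ρ₂ : V → ℝ}
    (hu : ∀ f ∈ faces, u f ∈ link) (hv : ∀ f ∈ faces, v f ∈ link)
    (ho₁ : 0 < ρ₁ o) (ho₂ : 0 < ρ₂ o)
    (hρ₁ : ∀ x ∈ link, 0 < ρ₁ x) (hρ₂ : ∀ x ∈ link, 0 < ρ₂ x)
    (hsum : ∑ f ∈ faces, tangencyAngle (ρ₁ o) (ρ₁ (u f)) (ρ₁ (v f)) ≤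
      ∑ f ∈ faces, tangencyAngle (ρ₂ o) (ρ₂ (u f)) (ρ₂ (v f)))
    (hmax : ∀ x ∈ link, ρ₂ x / ρ₁ x ≤ ρ₂ o / ρ₁ o) :
    ∀ f ∈ faces, ρ₂ (u f) / ρ₁ (u f) = ρ₂ o / ρ₁ o ∧ ρ₂ (v f) / ρ₁ (v f) = ρ₂ o / ρ₁ o := by
  set t := ρ₂ o / ρ₁ o
  have ht_ne : t ≠ 0 := (div_pos ho₂ ho₁).ne'
  have center_eq : t * ρ₁ o = ρ₂ o := div_mul_cancel₀ _ ho₁.ne'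
  have label_le : ∀ x ∈ link, ρ₂ x ≤ t * ρ₁ x := fun x hx ↦ (div_le_iff₀ (hρ₁ x hx)).1 (hmax x hx)
  have scaled_sum_le : ∑ f ∈ faces, tangencyAngle (ρ₂ o) (t * ρ₁ (u f)) (t * ρ₁ (v f)) ≤
      ∑ f ∈ faces, tangencyAngle (ρ₂ o) (ρ₂ (u f)) (ρ₂ (v f)) := by
    simpa only [← center_eq, tangencyAngle_mul_mul_mul ht_ne] using hsum
  intro f hf
  obtain ⟨label_u, label_v⟩ :=
    eq_of_sum_tangencyAngle_le (r' := fun x ↦ t * ρ₁ x) hu hv ho₂ hρ₂ label_le scaled_sum_le f hf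
  exact ⟨(div_eq_iff (hρ₁ _ (hu f hf)).ne').2 label_u,
    (div_eq_iff (hρ₁ _ (hv f hf)).ne').2 label_v⟩

end Flower

theorem cyclicSucc_mem_Icc {m i : ℕ} (hi : i ∈ Icc 1 m) :
    (if i = m then 1 else i + 1) ∈ Icc 1 m := by
  rw [mem_Icc] at hi ⊢
  split_ifs <;> lia

/-- Local step of the Maximum Principle (Fact 2.1) for a star with center `0`
and boundary vertices `1, …, m` in cyclic order (the cyclic successor of `i`
among `1, …, m` is `if i = m then 1 else i + 1`): if the angle sum of `ρ₂` at
the center is at least that of `ρ₁`, and the ratio `ρ₂/ρ₁` attains its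
maximum over the star at the center, then the ratio is constant on the star. -/
theorem star_maximum_principle
    (m : ℕ) (hm : 3 ≤ m)
    (ρ₁ ρ₂ : ℕ → ℝ)
    (hρ₁ : ∀ i ≤ m, 0 < ρ₁ i)
    (hρ₂ : ∀ i ≤ m, 0 < ρ₂ i)
    (Θ₁ Θ₂ : ℝ)
    (hΘ₁ : Θ₁ = ∑ i ∈ Finset.Icc 1 m,
      Real.arccos (1 - 2 * ρ₁ i * ρ₁ (if i = m then 1 else i + 1) /
        ((ρ₁ 0 + ρ₁ i) * (ρ₁ 0 + ρ₁ (if i = m then 1 else i + 1)))))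
    (hΘ₂ : Θ₂ = ∑ i ∈ Finset.Icc 1 m,
      Real.arccos (1 - 2 * ρ₂ i * ρ₂ (if i = m then 1 else i + 1) /
        ((ρ₂ 0 + ρ₂ i) * (ρ₂ 0 + ρ₂ (if i = m then 1 else i + 1)))))
    (hΘ : Θ₁ ≤ Θ₂)
    (hmax : ∀ i ∈ Finset.Icc 1 m, ρ₂ i / ρ₁ i ≤ ρ₂ 0 / ρ₁ 0) :
    ∀ i ∈ Finset.Icc 1 m, ρ₂ i / ρ₁ i = ρ₂ 0 / ρ₁ 0 := by
  exact fun i hi ↦ (star_maximum_principle_general (link := Icc 1 m) (u := id)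
    (fun _ hf ↦ hf) (fun _ hf ↦ cyclicSucc_mem_Icc hf) (hρ₁ 0 m.zero_le) (hρ₂ 0 m.zero_le)
    (fun j hj ↦ hρ₁ j (mem_Icc.1 hj).2) (fun j hj ↦ hρ₂ j (mem_Icc.1 hj).2)
    (hΘ₁ ▸ hΘ₂ ▸ hΘ) hmax i hi).1
end
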